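/- arXiv:1912.08128 — 3 statements merged into one kernel-verified Lean document; each statement's English description precedes it below -/
import Mathlib

section
/- For Q, Q' ∈ Q_F(N, d_K): the classes [Q] and [Q'] are equal in C_F(N,d_K) (i.e., Q' = Q^γ for some γ ∈ Γ_{F,1}(N)) if and only if the fractional ideals [ω_Q,1]_F = O_F·ω_Q + O_F and [ω_{Q'},1]_F define the same class in the ray class group C(N·O_K) of K modulo N·O_K. -/
open NumberField Complex

noncomputable section

def iota (F K : Type) [Field F] [Field K] [NumberField F] [Algebra F K]
    (u : 𝓞 F) : K := algebraMap F K (u : F)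

def IsGammaN (F : Type) [Field F] [NumberField F] (τ : F →+* ℝ) (N : ℕ)
    (γ : Matrix (Fin 2) (Fin 2) (𝓞 F)) : Prop :=
  IsUnit γ.det ∧ 0 < τ (γ.det : F) ∧
    (N : 𝓞 F) ∣ γ 1 0 ∧ ∃ ζ : (𝓞 F)ˣ, (N : 𝓞 F) ∣ (γ 1 1 - (ζ : 𝓞 F))

def FormAct (F : Type) [Field F] [NumberField F]
    (γ : Matrix (Fin 2) (Fin 2) (𝓞 F)) (a b c a' b' c' : 𝓞 F) : Prop :=
  γ.det * a' = a * γ 0 0 ^ 2 + b * γ 0 0 * γ 1 0 + c * γ 1 0 ^ 2 ∧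
  γ.det * b' = 2 * a * γ 0 0 * γ 0 1 + b * (γ 0 0 * γ 1 1 + γ 0 1 * γ 1 0)
      + 2 * c * γ 1 0 * γ 1 1 ∧
  γ.det * c' = a * γ 0 1 ^ 2 + b * γ 0 1 * γ 1 1 + c * γ 1 1 ^ 2

def IsFormN (F : Type) [Field F] [NumberField F] (τ : F →+* ℝ) (N : ℕ)
    (dK : 𝓞 F) (a b c : 𝓞 F) : Prop :=
  (∀ d : 𝓞 F, d ∣ a → d ∣ b → d ∣ c → IsUnit d) ∧
  0 < τ (a : F) ∧
  b ^ 2 - 4 * a * c = dK ∧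
  (∀ d : 𝓞 F, d ∣ a → d ∣ (N : 𝓞 F) → IsUnit d)

/-- `ω` is the root of `Q(x,1)` lying in the upper half-plane (via the fixed
embedding `σ : K → ℂ`). -/
def IsFormRoot (F K : Type) [Field F] [Field K] [NumberField F] [Algebra F K]
    (σ : K →+* ℂ) (a b c : 𝓞 F) (ω : K) : Prop :=
  iota F K a * ω ^ 2 + iota F K b * ω + iota F K c = 0 ∧ 0 < (σ ω).im

/-- Multiplicative congruence `ν ≡* 1 (mod N·O_K)`. -/
def MulCongOne (K : Type) [Field K] [NumberField K] (N : ℕ) (ν : K) : Prop :=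
  ∃ α β : 𝓞 K, (β : K) ≠ 0 ∧
    IsCoprime (Ideal.span {β}) (Ideal.span {(N : 𝓞 K)}) ∧
    ν = (α : K) / (β : K) ∧ (N : 𝓞 K) ∣ (α - β)


section Helpers

variable {R K : Type} [CommRing R] [IsDomain R] [Field K]

lemma h9_im (t : R →+* ℝ) (φ : R →+* K) (σ : K →+* ℂ)
    (hc : ∀ x, σ (φ x) = (t x : ℂ)) (u v : R) (w : K) :
    (σ (φ u * w + φ v)).im = t u * (σ w).im := by
  simp [hc]

lemma h9_re (t : R →+* ℝ) (φ : R →+* K) (σ : K →+* ℂ)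
    (hc : ∀ x, σ (φ x) = (t x : ℂ)) (u v : R) (w : K) :
    (σ (φ u * w + φ v)).re = t u * (σ w).re + t v := by
  simp [hc]

lemma h9_li (t : R →+* ℝ) (ht : Function.Injective t) (φ : R →+* K) (σ : K →+* ℂ)
    (hc : ∀ x, σ (φ x) = (t x : ℂ)) (u v : R) (w : K) (hw : 0 < (σ w).im)
    (h : φ u * w + φ v = 0) : u = 0 ∧ v = 0 := by
  have h1 := h9_im t φ σ hc u v w
  have h2 := h9_re t φ σ hc u v w
  rw [h] at h1 h2
  simp only [map_zero, Complex.zero_im, Complex.zero_re] at h1 h2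
  have h3 : t u = 0 := by
    rcases mul_eq_zero.mp h1.symm with h | h
    · exact h
    · exact absurd h hw.ne'
  rw [h3] at h2
  have h4 : t v = 0 := by linarith
  exact ⟨ht (by simpa using h3), ht (by simpa using h4)⟩

lemma h9_li2 (t : R →+* ℝ) (ht : Function.Injective t) (φ : R →+* K) (σ : K →+* ℂ)
    (hc : ∀ x, σ (φ x) = (t x : ℂ)) (u v u' v' : R) (w : K) (hw : 0 < (σ w).im)
    (h : φ u * w + φ v = φ u' * w + φ v') : u = u' ∧ v = v' := by
  have := h9_li t ht φ σ hc (u - u') (v - v') w hw (by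
    simp only [map_sub]; linear_combination h)
  exact ⟨sub_eq_zero.mp this.1, sub_eq_zero.mp this.2⟩

lemma h9_mob (t : R →+* ℝ) (φ : R →+* K) (σ : K →+* ℂ)
    (hc : ∀ x, σ (φ x) = (t x : ℂ)) (p q r s : R) (w z : K)
    (h : w * (φ r * z + φ s) = φ p * z + φ q) :
    t (p * s - q * r) * (σ z).im = (σ w).im *
      ((t r * (σ z).re + t s) ^ 2 + (t r * (σ z).im) ^ 2) := by
  have h1 := congrArg (fun x => (σ x).im) h
  have h2 := congrArg (fun x => (σ x).re) h
  simp only [map_mul σ w, Complex.mul_im, Complex.mul_re,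
    h9_im t φ σ hc, h9_re t φ σ hc] at h1 h2
  simp only [map_sub, map_mul]
  linear_combination (-(t s) - t r * (σ z).re) * h1 + t r * (σ z).im * h2

lemma h9_unique (t : R →+* ℝ) (φ : R →+* K) (σ : K →+* ℂ)
    (hc : ∀ x, σ (φ x) = (t x : ℂ)) (a b c : R) (ha : 0 < t a) (w z : K)
    (hw : 0 < (σ w).im) (hz : 0 < (σ z).im)
    (h1 : φ a * w ^ 2 + φ b * w + φ c = 0) (h2 : φ a * z ^ 2 + φ b * z + φ c = 0) :
    w = z := by
  have h : (w - z) * (φ a * (w + z) + φ b) = 0 := by linear_combination h1 - h2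
  rcases mul_eq_zero.mp h with h | h
  · exact sub_eq_zero.mp h
  · have h3 := h9_im t φ σ hc a b (w + z)
    rw [h] at h3
    simp only [map_zero, Complex.zero_im, map_add, Complex.add_im] at h3
    have : 0 < t a * ((σ w).im + (σ z).im) := by positivity
    linarith

/-- proportionality of two forms with a common root -/
lemma h9_form (t : R →+* ℝ) (ht : Function.Injective t) (φ : R →+* K) (σ : K →+* ℂ)
    (hc : ∀ x, σ (φ x) = (t x : ℂ)) (a b c A B C D : R) (z : K)
    (hz : 0 < (σ z).im) (ha : 0 < t a) (hA : 0 < t A) (hD : 0 < t D)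
    (h1 : φ a * z ^ 2 + φ b * z + φ c = 0) (h2 : φ A * z ^ 2 + φ B * z + φ C = 0)
    (hdisc : B ^ 2 - 4 * A * C = D ^ 2 * (b ^ 2 - 4 * a * c)) :
    D * a = A ∧ D * b = B ∧ D * c = C := by
  obtain ⟨e1, e2⟩ := h9_li2 t ht φ σ hc (a * B) (a * C) (A * b) (A * c) z hz (by
    simp only [map_mul]; linear_combination φ a * h2 - φ A * h1)
  have ha0 : a ≠ 0 := by rintro rfl; simp at ha
  have hne : b ^ 2 - 4 * a * c ≠ 0 := by
    intro h0
    have h3 : (φ (2 * a) * z + φ b) ^ 2 = 0 := by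
      have h0' := congrArg φ h0
      simp only [map_sub, map_mul, map_pow, map_ofNat, map_zero] at h0' ⊢
      linear_combination h0' + 4 * φ a * h1
    have h4 := h9_li t ht φ σ hc (2 * a) b z hz (by simpa using h3)
    have : t (2 * a) = 0 := by rw [h4.1]; simp
    simp only [map_mul, map_ofNat] at this
    linarith
  have e3 : (D * a) ^ 2 * (b ^ 2 - 4 * a * c) = A ^ 2 * (b ^ 2 - 4 * a * c) := by
    linear_combination (-a ^ 2) * hdisc + (a * B + A * b) * e1 - 4 * A * a * e2
  have e4 := mul_right_cancel₀ hne e3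
  have e5 : D * a = A := by
    rcases sq_eq_sq_iff_eq_or_eq_neg.mp e4 with h | h
    · exact h
    · exfalso
      have := congrArg t h
      simp only [map_mul, map_neg] at this
      have := mul_pos hD ha
      linarith
  refine ⟨e5, ?_, ?_⟩
  · apply mul_left_cancel₀ ha0
    rw [e1, ← e5]; ring
  · apply mul_left_cancel₀ ha0
    rw [e2, ← e5]; ring

/-- positivity of the form -/
lemma h9_pos (t : R →+* ℝ) (ht : Function.Injective t) (φ : R →+* K) (σ : K →+* ℂ)
    (hc : ∀ x, σ (φ x) = (t x : ℂ)) (a b c p r : R) (w : K)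
    (hw : 0 < (σ w).im) (ha : 0 < t a)
    (h1 : φ a * w ^ 2 + φ b * w + φ c = 0) (hpr : p ≠ 0 ∨ r ≠ 0) :
    0 < t (a * p ^ 2 + b * p * r + c * r ^ 2) := by
  have h2 := congrArg (fun x => (σ x).im) h1
  have h3 := congrArg (fun x => (σ x).re) h1
  simp only [map_add, map_mul, map_pow, hc, pow_two, Complex.add_im, Complex.add_re,
    Complex.mul_im, Complex.mul_re, Complex.ofReal_re, Complex.ofReal_im, map_zero,
    Complex.zero_im, Complex.zero_re] at h2 h3
  set x := (σ w).re
  set y := (σ w).im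
  have hb : t b = -2 * t a * x := by
    have : y * (t b + 2 * t a * x) = 0 := by linear_combination h2
    rcases mul_eq_zero.mp this with h | h
    · exact absurd h hw.ne'
    · linarith
  have hcc : t c = t a * (x ^ 2 + y ^ 2) := by
    rw [hb] at h3; linear_combination h3
  have key : t (a * p ^ 2 + b * p * r + c * r ^ 2) =
      t a * ((t p - x * t r) ^ 2 + (y * t r) ^ 2) := by
    simp only [map_add, map_mul, map_pow, hb, hcc]; ring
  rw [key]
  apply mul_pos ha
  by_cases hr : r = 0
  · subst hr
    have hp : t p ≠ 0 := by
      rcases hpr with h | h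
      · intro h'; exact h (ht (by simpa using h'))
      · exact absurd rfl h
    simp only [map_zero, mul_zero, sub_zero]
    positivity
  · have hr : t r ≠ 0 := fun h' => hr (ht (by simpa using h'))
    positivity

end Helpers

theorem stmt9 (F K : Type) [Field F] [Field K] [NumberField F] [NumberField K]
    [Algebra F K] (τ : F →+* ℝ) (σ : K →+* ℂ)
    (hcompat : ∀ x : F, σ (algebraMap F K x) = (τ x : ℂ))
    (hF_totallyReal : ∀ φ : F →+* ℂ, ∀ x : F, (φ x).im = 0)
    (hquadratic : Module.finrank F K = 2)
    (hclass : NumberField.classNumber F = 1)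
    (ωK : K) (hωKint : IsIntegral ℤ ωK) (hωKim : 0 < (σ ωK).im)
    (hgen : ∀ x : 𝓞 K, ∃ u v : 𝓞 F, (x : K) = iota F K u * ωK + iota F K v)
    (bK cK : 𝓞 F) (hmin : ωK ^ 2 + iota F K bK * ωK + iota F K cK = 0)
    (dK : 𝓞 F) (hdK : dK = bK ^ 2 - 4 * cK)
    (N : ℕ) (hN : 0 < N)
    (a b c : 𝓞 F) (hQ : IsFormN F τ N dK a b c)
    (a' b' c' : 𝓞 F) (hQ' : IsFormN F τ N dK a' b' c')
    (ω : K) (hω : IsFormRoot F K σ a b c ω)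
    (ω' : K) (hω' : IsFormRoot F K σ a' b' c' ω') :
    (∃ γ : Matrix (Fin 2) (Fin 2) (𝓞 F),
        IsGammaN F τ N γ ∧ FormAct F γ a b c a' b' c')
    ↔ (∃ ν : K, ν ≠ 0 ∧ MulCongOne K N ν ∧
        ∀ x : K, (∃ u v : 𝓞 F, x = iota F K u * ω + iota F K v) ↔
          (∃ u v : 𝓞 F, x = ν * (iota F K u * ω' + iota F K v))) := by
  obtain ⟨φ, hφ⟩ : ∃ φ : 𝓞 F →+* K, ∀ u, iota F K u = φ u :=
    ⟨(algebraMap F K).comp (algebraMap (𝓞 F) F), fun _ => rfl⟩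
  obtain ⟨ψ, hψ⟩ : ∃ ψ : 𝓞 F →+* 𝓞 K, ∀ u, ((ψ u : 𝓞 K) : K) = φ u :=
    ⟨algebraMap (𝓞 F) (𝓞 K), fun u => by rw [← hφ]; rfl⟩
  obtain ⟨t, htτ⟩ : ∃ t : 𝓞 F →+* ℝ, ∀ u : 𝓞 F, τ (u : F) = t u :=
    ⟨τ.comp (algebraMap (𝓞 F) F), fun _ => rfl⟩
  have ht : Function.Injective t := by
    intro x y h
    rw [← htτ, ← htτ] at h
    exact RingOfIntegers.ext (τ.injective h)
  have hc : ∀ x, σ (φ x) = (t x : ℂ) := by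
    intro x; rw [← hφ, ← htτ]; exact hcompat _
  obtain ⟨-, ha, hdisc, -⟩ := hQ
  obtain ⟨-, ha', hdisc', hcop⟩ := hQ'
  obtain ⟨hr, him⟩ := hω
  obtain ⟨hr', him'⟩ := hω'
  rw [htτ] at ha ha'
  simp only [hφ] at *
  have hφinj : Function.Injective φ := by
    intro x y h
    have h' := congrArg σ h
    rw [hc, hc] at h'
    exact ht (Complex.ofReal_injective h')
  have hφ0 : ∀ u, φ u = 0 → u = 0 := fun u h => hφinj (by simpa using h)
  have ha0' : a' ≠ 0 := by rintro rfl; simp at ha'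
  -- coprimality
  have hPID : IsPrincipalIdealRing (𝓞 F) := NumberField.classNumber_eq_one_iff.mp hclass
  have hcop' : IsCoprime a' (N : 𝓞 F) := by
    have : IsRelPrime a' (N : 𝓞 F) := fun d h1 h2 => hcop d h1 h2
    exact this.isCoprime
  have hcopK : IsCoprime (ψ a') (N : 𝓞 K) := by
    simpa using hcop'.map ψ
  -- a' ω' is integral
  have hint : IsIntegral ℤ (φ a' * ω') := by
    have h1 : IsIntegral (𝓞 K) (φ a' * ω') := by
      refine ⟨Polynomial.X ^ 2 + (Polynomial.C (ψ b') * Polynomial.X +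
        Polynomial.C (ψ (a' * c'))), ?_, ?_⟩
      · apply Polynomial.monic_X_pow_add
        compute_degree!
      · have e1 : algebraMap (𝓞 K) K (ψ b') = φ b' := hψ b'
        have e2 : algebraMap (𝓞 K) K (ψ (a' * c')) = φ (a' * c') := hψ _
        simp only [Polynomial.eval₂_add, Polynomial.eval₂_mul, Polynomial.eval₂_pow,
          Polynomial.eval₂_X, Polynomial.eval₂_C, e1, e2]
        rw [map_mul]
        linear_combination φ a' * hr'
    exact isIntegral_trans _ h1
  obtain ⟨θ, hθ⟩ : ∃ θ : 𝓞 K, (θ : K) = φ a' * ω' := ⟨⟨_, hint⟩, rfl⟩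
  constructor
  · rintro ⟨γ, ⟨hu, hpos, ⟨r0, hr0⟩, ζ, s0, hs0⟩, hA, hB, hC⟩
    rw [htτ] at hpos
    rw [Matrix.det_fin_two] at hu hpos hA hB hC
    generalize γ 0 0 = p at *
    generalize γ 0 1 = q at *
    generalize γ 1 0 = r at *
    generalize γ 1 1 = s at *
    have hden : φ r * ω' + φ s ≠ 0 := by
      intro h
      obtain ⟨h1, h2⟩ := h9_li t ht φ σ hc r s ω' him' h
      rw [h1, h2] at hpos
      simp at hpos
    have hnum : ω * (φ r * ω' + φ s) = φ p * ω' + φ q := by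
      set z := (φ p * ω' + φ q) / (φ r * ω' + φ s) with hz
      have hz1 : z * (φ r * ω' + φ s) = φ p * ω' + φ q := div_mul_cancel₀ _ hden
      have hz2 : φ a * z ^ 2 + φ b * z + φ c = 0 := by
        have hA' := congrArg φ hA
        have hB' := congrArg φ hB
        have hC' := congrArg φ hC
        simp only [map_add, map_sub, map_mul, map_pow, map_ofNat] at hA' hB' hC'
        have : (φ r * ω' + φ s) ^ 2 * (φ a * z ^ 2 + φ b * z + φ c) = 0 := by
          have e : (φ r * ω' + φ s) ^ 2 * (φ a * z ^ 2 + φ b * z + φ c) =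
            φ a * (z * (φ r * ω' + φ s)) ^ 2
            + φ b * (z * (φ r * ω' + φ s)) * (φ r * ω' + φ s)
            + φ c * (φ r * ω' + φ s) ^ 2 := by ring
          rw [e, hz1]
          linear_combination (φ p * φ s - φ q * φ r) * hr' - ω' ^ 2 * hA' - ω' * hB' - hC'
        rcases mul_eq_zero.mp this with h | h
        · exact absurd (by simpa using h) hden
        · exact h
      have hz3 : 0 < (σ z).im := by
        have h := h9_mob t φ σ hc p q r s z ω' hz1
        have h1 := mul_pos hpos him'
        rw [h] at h1
        exact pos_of_mul_pos_left h1 (by positivity)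
      rw [h9_unique t φ σ hc a b c ha ω z him hz3 hr hz2]
      exact hz1
    have hζ : φ (ζ : 𝓞 F) * φ ((ζ⁻¹ : (𝓞 F)ˣ) : 𝓞 F) = 1 := by
      rw [← map_mul]; simp
    have hζ0 : φ (ζ : 𝓞 F) ≠ 0 := left_ne_zero_of_mul_eq_one hζ
    obtain ⟨D, hD⟩ := hu
    have hDi : φ (p * s - q * r) * φ ((D⁻¹ : (𝓞 F)ˣ) : 𝓞 F) = 1 := by
      rw [← map_mul, ← hD]; simp
    refine ⟨φ ζ / (φ r * ω' + φ s), div_ne_zero hζ0 hden, ?_, ?_⟩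
    · have hβ : ((ψ r * θ + ψ (a' * s) : 𝓞 K) : K) = φ a' * (φ r * ω' + φ s) := by
        simp only [map_add, map_mul, hψ, hθ]; ring
      refine ⟨ψ (a' * ζ), ψ r * θ + ψ (a' * s), ?_, ?_, ?_, ?_⟩
      · rw [hβ]
        exact mul_ne_zero (fun h => ha0' (hφ0 _ h)) hden
      · rw [Ideal.isCoprime_span_singleton_iff]
        have h1 : IsCoprime (ψ (a' * ζ)) (N : 𝓞 K) := by
          rw [map_mul]
          exact (isCoprime_mul_unit_right_left (ζ.isUnit.map ψ) _ _).mpr hcopK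
        have h2 : ψ r * θ + ψ (a' * s) =
            ψ (a' * ζ) + (N : 𝓞 K) * (ψ r0 * θ + ψ (a' * s0)) := by
          have e : s = ζ + N * s0 := by linear_combination hs0
          rw [hr0, e]; simp only [map_mul, map_add, map_natCast]; ring
        rw [h2]
        exact IsCoprime.add_mul_left_left h1 _
      · rw [hβ, hψ, map_mul, mul_div_mul_left]
        exact fun h => ha0' (hφ0 _ h)
      · refine ⟨-(ψ r0 * θ + ψ (a' * s0)), ?_⟩
        have e : s = ζ + N * s0 := by linear_combination hs0
        rw [hr0, e]; simp only [map_mul, map_add, map_natCast]; ring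
    · intro x
      set i := φ ((ζ⁻¹ : (𝓞 F)ˣ) : 𝓞 F)
      set Di := φ ((D⁻¹ : (𝓞 F)ˣ) : 𝓞 F)
      simp only [map_sub, map_mul] at hDi
      constructor
      · rintro ⟨u, v, rfl⟩
        refine ⟨((ζ⁻¹ : (𝓞 F)ˣ) : 𝓞 F) * (u * p + v * r),
          ((ζ⁻¹ : (𝓞 F)ˣ) : 𝓞 F) * (u * q + v * s), ?_⟩
        rw [div_mul_eq_mul_div, eq_div_iff hden]
        simp only [map_mul, map_add]
        linear_combination φ u * hnum - (φ u * (φ p * ω' + φ q) + φ v * (φ r * ω' + φ s)) * hζ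
      · rintro ⟨u, v, rfl⟩
        refine ⟨((D⁻¹ : (𝓞 F)ˣ) : 𝓞 F) * ζ * (u * s - v * r),
          ((D⁻¹ : (𝓞 F)ˣ) : 𝓞 F) * ζ * (v * p - u * q), ?_⟩
        rw [div_mul_eq_mul_div, div_eq_iff hden]
        simp only [map_mul, map_add, map_sub]
        linear_combination (-(Di * φ ζ * (φ u * φ s - φ v * φ r))) * hnum
          - φ ζ * (φ u * ω' + φ v) * hDi
  · rintro ⟨ν, hν, ⟨α, β, hβ0, hαβ, hνe, k, hk⟩, hx⟩
    obtain ⟨p, q, hpq⟩ := (hx ω).mp ⟨1, 0, by simp⟩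
    obtain ⟨r, s, hrs⟩ := (hx 1).mp ⟨0, 1, by simp⟩
    obtain ⟨p1, q1, hpq1⟩ := (hx (ν * ω')).mpr ⟨1, 0, by simp⟩
    obtain ⟨r1, s1, hrs1⟩ := (hx ν).mpr ⟨0, 1, by simp⟩
    have hnum : ω * (φ r * ω' + φ s) = φ p * ω' + φ q := by
      linear_combination (φ r * ω' + φ s) * hpq - (φ p * ω' + φ q) * hrs
    have hden : φ r * ω' + φ s ≠ 0 := by
      intro h; rw [h] at hrs; simp at hrs
    -- determinant is a unit
    have hunit : IsUnit (p * s - q * r) := by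
      obtain ⟨e1, e2⟩ := h9_li2 t ht φ σ hc (p * p1 + q * r1) (p * q1 + q * s1) 1 0 ω him (by
        simp only [map_add, map_mul, map_one, map_zero]
        linear_combination (-1) * hpq - φ p * hpq1 - φ q * hrs1)
      obtain ⟨e3, e4⟩ := h9_li2 t ht φ σ hc (r * p1 + s * r1) (r * q1 + s * s1) 0 1 ω him (by
        simp only [map_add, map_mul, map_one, map_zero]
        linear_combination (-1) * hrs - φ r * hpq1 - φ s * hrs1)
      refine IsUnit.of_mul_eq_one (p1 * s1 - q1 * r1) ?_
      linear_combination e1 * (r * q1 + s * s1) + e4 - e2 * (r * p1 + s * r1)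
    have hpos : 0 < t (p * s - q * r) := by
      have h := h9_mob t φ σ hc p q r s ω ω' hnum
      have h1 : 0 ≤ t (p * s - q * r) * (σ ω').im := by rw [h]; positivity
      have h2 := nonneg_of_mul_nonneg_left h1 him'
      refine lt_of_le_of_ne h2 fun h0 => hunit.ne_zero (ht ?_)
      rw [← h0, map_zero]
    -- a' ω' = ωK + v
    obtain ⟨v, hv⟩ : ∃ v, φ a' * ω' = ωK + φ v := by
      obtain ⟨u, v, huv⟩ := hgen θ
      rw [hθ] at huv
      have hsq : φ 1 * (2 * (φ a' * ω') + φ b') ^ 2 + φ 0 * (2 * (φ a' * ω') + φ b')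
          + φ (-dK) = 0 := by
        rw [← hdisc']
        simp only [map_one, map_zero, map_neg, map_sub, map_mul, map_pow, map_ofNat]
        linear_combination 4 * φ a' * hr'
      have hsq2 : φ 1 * (2 * ωK + φ bK) ^ 2 + φ 0 * (2 * ωK + φ bK) + φ (-dK) = 0 := by
        rw [hdK]
        simp only [map_one, map_zero, map_neg, map_sub, map_mul, map_pow, map_ofNat]
        linear_combination 4 * hmin
      have i1 : 0 < (σ (2 * (φ a' * ω') + φ b')).im := by
        have := h9_im t φ σ hc (2 * a') b' ω'
        simp only [map_mul φ, map_ofNat φ, map_mul t, map_ofNat t] at this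
        rw [← mul_assoc, this]; positivity
      have i2 : 0 < (σ (2 * ωK + φ bK)).im := by
        have := h9_im t φ σ hc 2 bK ωK
        simp only [map_ofNat φ, map_ofNat t] at this
        rw [this]; positivity
      have e := h9_unique t φ σ hc 1 0 (-dK) (by simp) _ _ i1 i2 hsq hsq2
      rw [huv] at e
      obtain ⟨e1, -⟩ := h9_li2 t ht φ σ hc (2 * u) (2 * v + b') (2 * 1) bK ωK hωKim (by
        simp only [map_add, map_mul, map_ofNat, map_one]
        linear_combination e)
      have e2 : u = 1 := mul_left_cancel₀ two_ne_zero e1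
      exact ⟨v, by rw [huv, e2]; simp⟩
    -- congruence
    have hαN : IsCoprime α (N : 𝓞 K) := by
      rw [Ideal.isCoprime_span_singleton_iff] at hαβ
      have : α = β + N * k := by linear_combination hk
      rw [this]
      exact IsCoprime.add_mul_left_left hαβ _
    have hμ : (ψ r * θ + ψ (a' * s)) * α = ψ a' * β := by
      apply RingOfIntegers.ext
      simp only [map_add, map_mul, hψ, hθ]
      rw [hνe, div_mul_eq_mul_div, eq_div_iff hβ0] at hrs
      linear_combination (-φ a') * hrs
    have hdvd : (N : 𝓞 K) ∣ ψ r * θ + ψ (a' * s) - ψ a' := by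
      apply hαN.symm.dvd_of_dvd_mul_right
      refine ⟨-(ψ a' * k), ?_⟩
      linear_combination hμ - ψ a' * hk
    obtain ⟨m, hm⟩ := hdvd
    obtain ⟨m1, m2, hm12⟩ := hgen m
    obtain ⟨f1, f2⟩ := h9_li2 t ht φ σ hc r (r * v + a' * s - a') (N * m1) (N * m2) ωK hωKim (by
      have hm' := congrArg (fun x : 𝓞 K => (x : K)) hm
      simp only [map_add, map_mul, map_sub, hψ, hθ, map_natCast, hm12, hv] at hm' ⊢
      linear_combination hm')
    have hNr : (N : 𝓞 F) ∣ r := ⟨m1, f1⟩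
    have hNs : (N : 𝓞 F) ∣ s - 1 := by
      apply hcop'.symm.dvd_of_dvd_mul_left
      refine ⟨m2 - m1 * v, ?_⟩
      linear_combination f2 - v * f1
    refine ⟨!![p, q; r, s], ⟨?_, ?_, ?_, 1, ?_⟩, ?_⟩
    · rw [Matrix.det_fin_two_of]; exact hunit
    · rw [Matrix.det_fin_two_of, htτ]; exact hpos
    · simpa using hNr
    · simpa using hNs
    · unfold FormAct
      rw [Matrix.det_fin_two_of]
      simp only [Matrix.of_apply, Matrix.cons_val', Matrix.cons_val_zero, Matrix.cons_val_one,
        Matrix.cons_val_fin_one]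
      refine h9_form t ht φ σ hc a' b' c' _ _ _ _ ω' him' ha' ?_ hpos hr' ?_ ?_
      · apply h9_pos t ht φ σ hc a b c p r ω him ha hr
        by_contra! h
        rw [h.1, h.2] at hpos
        simp at hpos
      · simp only [map_add, map_mul, map_pow, map_ofNat]
        have e : φ a * (φ p * ω' + φ q) ^ 2 + φ b * (φ p * ω' + φ q) * (φ r * ω' + φ s)
            + φ c * (φ r * ω' + φ s) ^ 2 = 0 := by
          rw [← hnum]
          linear_combination (φ r * ω' + φ s) ^ 2 * hr
        linear_combination e
      · rw [hdisc', ← hdisc]; ring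
end
end

section
/- The map φ_{K,N} : C_F(N, d_K) → C(N·O_K) sending the class [Q] to the ray class [[ω_Q, 1]_F] is surjective. Consequently, φ_{K,N} is a bijection, and C_F(N,d_K) inherits a group structure isomorphic to the ray class group C(N·O_K). -/
open NumberField Complex

noncomputable section

/-- A fractional ideal `I` is relatively prime to `N·O_K`. -/
def CoprimeToN (K : Type) [Field K] [NumberField K] (N : ℕ)
    (I : FractionalIdeal (nonZeroDivisors (𝓞 K)) K) : Prop :=
  ∃ b₁ b₂ : Ideal (𝓞 K),
    IsCoprime b₁ (Ideal.span {(N : 𝓞 K)}) ∧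
    IsCoprime b₂ (Ideal.span {(N : 𝓞 K)}) ∧
    I * (b₂ : FractionalIdeal (nonZeroDivisors (𝓞 K)) K)
      = (b₁ : FractionalIdeal (nonZeroDivisors (𝓞 K)) K)

section helpers

theorem iota_add' (F K : Type) [Field F] [Field K] [NumberField F] [Algebra F K] (u v : 𝓞 F) :
    iota F K (u + v) = iota F K u + iota F K v := by simp [iota]

theorem iota_mul' (F K : Type) [Field F] [Field K] [NumberField F] [Algebra F K] (u v : 𝓞 F) :
    iota F K (u * v) = iota F K u * iota F K v := by simp [iota]

theorem iota_neg' (F K : Type) [Field F] [Field K] [NumberField F] [Algebra F K] (u : 𝓞 F) :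
    iota F K (-u) = - iota F K u := by simp [iota]

theorem iota_sub' (F K : Type) [Field F] [Field K] [NumberField F] [Algebra F K] (u v : 𝓞 F) :
    iota F K (u - v) = iota F K u - iota F K v := by simp [iota]

theorem iota_zero' (F K : Type) [Field F] [Field K] [NumberField F] [Algebra F K] :
    iota F K 0 = 0 := by simp [iota]

theorem iota_one' (F K : Type) [Field F] [Field K] [NumberField F] [Algebra F K] :
    iota F K 1 = 1 := by simp [iota]

theorem iota_nat' (F K : Type) [Field F] [Field K] [NumberField F] [Algebra F K] (n : ℕ) :
    iota F K (n : 𝓞 F) = (n : K) := by simp [iota]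

theorem iota_inj' (F K : Type) [Field F] [Field K] [NumberField F] [Algebra F K] (u v : 𝓞 F)
    (h : iota F K u = iota F K v) : u = v :=
  RingOfIntegers.ext ((algebraMap F K).injective h)

theorem iota_coe' (F K : Type) [Field F] [Field K] [NumberField F] [NumberField K] [Algebra F K]
    (u : 𝓞 F) : ((algebraMap (𝓞 F) (𝓞 K) u : 𝓞 K) : K) = iota F K u := by
  rfl

theorem iota_sigma' (F K : Type) [Field F] [Field K] [NumberField F] [Algebra F K]
    (τ : F →+* ℝ) (σ : K →+* ℂ)
    (hcompat : ∀ x : F, σ (algebraMap F K x) = (τ x : ℂ)) (u : 𝓞 F) :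
    σ (iota F K u) = (τ (u : F) : ℂ) := hcompat _

theorem indep' (F K : Type) [Field F] [Field K] [NumberField F] [Algebra F K]
    (τ : F →+* ℝ) (σ : K →+* ℂ)
    (hcompat : ∀ x : F, σ (algebraMap F K x) = (τ x : ℂ)) (z : K) (hz : (σ z).im ≠ 0)
    (u v u' v' : 𝓞 F)
    (h : iota F K u * z + iota F K v = iota F K u' * z + iota F K v') : u = u' ∧ v = v' := by
  have h1 : u = u' := by
    have h2 := congrArg (fun t => (σ t).im) h
    simp only [map_add, map_mul, iota_sigma' F K τ σ hcompat] at h2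
    simp at h2
    rcases h2 with h2 | h2
    · exact RingOfIntegers.ext (τ.injective h2)
    · exact absurd h2 hz
  subst h1
  exact ⟨rfl, iota_inj' F K _ _ (by linear_combination h)⟩

/-- approximations in a PID -/
theorem approx' {R : Type} [CommRing R] [IsDomain R] [IsPrincipalIdealRing R] (y n x : R)
    (hx : x ≠ 0) (h : ∀ d, d ∣ x → d ∣ y → d ∣ n → IsUnit d) :
    ∃ t, IsCoprime x (y + n * t) := by
  revert hx h
  induction x using UniqueFactorizationMonoid.induction_on_prime with
  | h₁ => intro hx; exact absurd rfl hx
  | h₂ x hx => intro _ _; exact ⟨0, by obtain ⟨w, hw⟩ := hx.exists_left_inv; exact ⟨w, 0, by rw [hw]; ring⟩⟩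
  | h₃ x p hx hp ih =>
    intro _ h
    obtain ⟨t, ht⟩ := ih hx (fun d h1 => h d (h1.mul_left p))
    by_cases hd : p ∣ y + n * t
    · refine ⟨t + x, IsCoprime.mul_left ?_ ?_⟩
      · refine (Irreducible.coprime_iff_not_dvd hp.irreducible).2 fun h2 => ?_
        have h3 : p ∣ n * x := by
          have := dvd_sub h2 hd
          ring_nf at this
          exact this
        rcases hp.dvd_or_dvd h3 with h4 | h4
        · refine hp.not_isUnit (h p (dvd_mul_right _ _) ?_ h4)
          exact (dvd_add_left (h4.mul_right t)).1 hd
        · exact hp.not_isUnit (ht.isUnit_of_dvd' h4 hd)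
      · have : y + n * (t + x) = (y + n * t) + x * n := by ring
        rw [this]
        exact ht.add_mul_left_right n
    · exact ⟨t, IsCoprime.mul_left ((Irreducible.coprime_iff_not_dvd hp.irreducible).2 hd) ht⟩

theorem approx2' {R : Type} [CommRing R] [IsDomain R] [IsPrincipalIdealRing R] (x y n : R)
    (hn : n ≠ 0) (h : ∀ d, d ∣ x → d ∣ y → d ∣ n → IsUnit d) :
    ∃ s t, IsCoprime (x + n * s) (y + n * t) := by
  by_cases hx : x = 0
  · subst hx
    obtain ⟨t, ht⟩ := approx' y n n hn (fun d _ h2 h3 => h d (dvd_zero d) h2 h3)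
    exact ⟨1, t, by simpa using ht⟩
  · obtain ⟨t, ht⟩ := approx' y n x hx h
    exact ⟨0, t, by simpa using ht⟩

theorem lattice' (F K : Type) [Field F] [Field K] [NumberField F] [NumberField K]
    [Algebra F K] [IsPrincipalIdealRing (𝓞 F)] (τ : F →+* ℝ) (σ : K →+* ℂ)
    (hcompat : ∀ x : F, σ (algebraMap F K x) = (τ x : ℂ))
    (ωK : 𝓞 K) (hωKim : 0 < (σ ωK).im)
    (hgen : ∀ x : 𝓞 K, ∃ u v : 𝓞 F, (x : K) = iota F K u * ωK + iota F K v)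
    (J : Ideal (𝓞 K)) (hJ : J ≠ ⊥) :
    ∃ e f : 𝓞 K, e ∈ J ∧ f ∈ J ∧ (∀ x ∈ J, ∃ u v : 𝓞 F, (x : K) = iota F K u * e + iota F K v * f)
      ∧ ∀ u v : 𝓞 F, iota F K u * e + iota F K v * f = 0 → u = 0 ∧ v = 0 := by
  let j := algebraMap (𝓞 F) (𝓞 K)
  let U : Ideal (𝓞 F) :=
    { carrier := {u | ∃ v, j u * ωK + j v ∈ J}
      zero_mem' := ⟨0, by simp⟩
      add_mem' := by
        rintro a b ⟨v, hv⟩ ⟨w, hw⟩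
        refine ⟨v + w, ?_⟩
        convert J.add_mem hv hw using 1
        simp only [map_add]; ring
      smul_mem' := by
        rintro c a ⟨v, hv⟩
        refine ⟨c * v, ?_⟩
        convert J.mul_mem_left (j c) hv using 1
        simp only [map_mul, smul_eq_mul]; ring }
  let V : Ideal (𝓞 F) := J.comap j
  obtain ⟨u0, hu0⟩ := IsPrincipalIdealRing.principal U
  obtain ⟨v0, hv0⟩ := IsPrincipalIdealRing.principal V
  have hu0m : u0 ∈ U := by rw [hu0]; exact Submodule.mem_span_singleton_self u0
  have hv0m : v0 ∈ V := by rw [hv0]; exact Submodule.mem_span_singleton_self v0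
  have hVne : V ≠ ⊥ := Ideal.IsIntegral.comap_ne_bot (𝓞 F) hJ
  have hv0ne : v0 ≠ 0 := by
    rintro rfl
    apply hVne
    rw [hv0]; simp
  have hu0ne : u0 ≠ 0 := by
    rintro rfl
    have h1 : v0 ∈ U := ⟨0, by
      rw [map_zero, add_zero]; exact J.mul_mem_right _ hv0m⟩
    rw [hu0] at h1
    simp at h1
    exact hv0ne h1
  obtain ⟨v1, hv1⟩ := hu0m
  have hz : (σ ωK).im ≠ 0 := hωKim.ne'
  refine ⟨j u0 * ωK + j v1, j v0, hv1, hv0m, ?_, ?_⟩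
  · intro x hx
    obtain ⟨u, v, huv⟩ := hgen x
    have hx' : x = j u * ωK + j v := RingOfIntegers.ext (by rw [huv]; rfl)
    have hu : u ∈ U := ⟨v, hx' ▸ hx⟩
    rw [hu0] at hu
    obtain ⟨t, rfl⟩ := Submodule.mem_span_singleton.1 hu
    have hw : v - t * v1 ∈ V := by
      have := J.sub_mem hx (J.mul_mem_left (j t) hv1)
      rw [hx'] at this
      change j (v - t * v1) ∈ J
      convert this using 1
      simp only [map_mul, map_sub, smul_eq_mul]; ring
    rw [hv0] at hw
    obtain ⟨w, hw⟩ := Submodule.mem_span_singleton.1 hw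
    refine ⟨t, w, ?_⟩
    have hv : v = w * v0 + t * v1 := by rw [← smul_eq_mul, hw]; ring
    rw [huv, hv]
    simp only [map_add, map_mul, j, iota_coe', iota_add', iota_mul', smul_eq_mul]
    ring
  · intro u v h
    have h1 := indep' F K τ σ hcompat ωK hz (u * u0) (u * v1 + v * v0) 0 0 (by
      simp only [map_add, map_mul, j, iota_coe'] at h
      simp only [iota_add', iota_mul', iota_zero']
      linear_combination h)
    have hu : u = 0 := by simpa [hu0ne] using h1.1
    subst hu
    exact ⟨rfl, by simpa [hv0ne] using h1.2⟩


theorem unit_of_dvd' (F K : Type) [Field F] [Field K] [NumberField F] [NumberField K]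
    [Algebra F K] (τ : F →+* ℝ) (σ : K →+* ℂ)
    (hcompat : ∀ x : F, σ (algebraMap F K x) = (τ x : ℂ))
    (ωK : 𝓞 K) (hωKim : 0 < (σ ωK).im)
    (hgen : ∀ x : 𝓞 K, ∃ u v : 𝓞 F, (x : K) = iota F K u * ωK + iota F K v)
    (d r s : 𝓞 F) (x : 𝓞 K)
    (h : iota F K r * ωK + iota F K s = iota F K d * x) : d ∣ r ∧ d ∣ s := by
  obtain ⟨u, v, huv⟩ := hgen x
  have h1 := indep' F K τ σ hcompat ωK hωKim.ne' r s (d * u) (d * v) (by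
    rw [h, huv]; simp only [iota_mul']; ring)
  exact ⟨⟨u, h1.1⟩, ⟨v, h1.2⟩⟩

theorem formB' (F K : Type) [Field F] [Field K] [NumberField F] [NumberField K]
    [Algebra F K] (τ : F →+* ℝ) (σ : K →+* ℂ)
    (hcompat : ∀ x : F, σ (algebraMap F K x) = (τ x : ℂ))
    (ωK : 𝓞 K) (hωKim : 0 < (σ ωK).im)
    (bK cK : 𝓞 F) (hmin : (ωK : K) ^ 2 + iota F K bK * ωK + iota F K cK = 0)
    (dK : 𝓞 F) (hdK : dK = bK ^ 2 - 4 * cK) (a b c : 𝓞 F) (ω : K)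
    (ha : 0 < τ (a : F)) (hd : b ^ 2 - 4 * a * c = dK)
    (hr : IsFormRoot F K σ a b c ω) :
    ∃ B : 𝓞 F, (ωK : K) = iota F K a * ω + iota F K B := by
  obtain ⟨hr, him⟩ := hr
  have hd2 : iota F K b ^ 2 - 4 * iota F K a * iota F K c
      = iota F K bK ^ 2 - 4 * iota F K cK := by
    rw [hdK] at hd
    have := congrArg (iota F K) hd
    simpa [iota, map_ofNat] using this
  have hsq : (2 * iota F K a * ω + iota F K b) ^ 2 = (2 * ωK + iota F K bK) ^ 2 := by
    linear_combination (4 * iota F K a) * hr - 4 * hmin + hd2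
  have hX : 2 * iota F K a * ω + iota F K b = 2 * ωK + iota F K bK := by
    rcases sq_eq_sq_iff_eq_or_eq_neg.1 hsq with h | h
    · exact h
    · exfalso
      have h2 := congrArg (fun t => (σ t).im) h
      simp only [map_add, map_mul, map_neg, iota_sigma' F K τ σ hcompat] at h2
      simp [mul_assoc, map_ofNat] at h2
      have := mul_pos ha him
      linarith
  have hE : algebraMap F K (((b : F) - bK) / 2) = ωK - iota F K a * ω := by
    have : algebraMap F K (((b : F) - bK) / 2) = (iota F K b - iota F K bK) / 2 := by
      simp [iota, map_ofNat]
    rw [this]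
    linear_combination hX / 2
  have haω : IsIntegral (𝓞 F) (iota F K a * ω) := by
    refine ⟨Polynomial.X ^ 2 + Polynomial.C b * Polynomial.X + Polynomial.C (a * c), ?_, ?_⟩
    · monicity!
    · have e : ∀ u : 𝓞 F, algebraMap (𝓞 F) K u = iota F K u := fun _ => rfl
      simp only [Polynomial.eval₂_add, Polynomial.eval₂_mul, Polynomial.eval₂_pow,
        Polynomial.eval₂_X, Polynomial.eval₂_C, e, iota_mul']
      linear_combination (iota F K a) * hr
  have haω' : IsIntegral ℤ (iota F K a * ω) := isIntegral_trans (A := 𝓞 F) _ haω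
  have hint : IsIntegral ℤ (((b : F) - bK) / 2) := by
    refine (isIntegral_algebraMap_iff (algebraMap F K).injective).1 ?_
    rw [hE]
    exact (RingOfIntegers.isIntegral_coe ωK).sub haω'
  refine ⟨⟨_, hint⟩, ?_⟩
  change _ = _ + algebraMap F K (((b : F) - bK) / 2)
  rw [hE]; ring

theorem det_pos' (p q r s : ℝ) (z z' : ℂ) (hz : 0 < z.im) (hz' : 0 < z'.im)
    (h : z * (r * z' + s) = p * z' + q) (hne : ¬ (r = 0 ∧ s = 0)) : 0 < p * s - q * r := by
  have h1 := congrArg Complex.re h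
  have h2 := congrArg Complex.im h
  simp at h1 h2
  have h3 : (p * s - q * r) * z'.im = z.im * ((r * z'.re + s) ^ 2 + (r * z'.im) ^ 2) := by
    linear_combination r * z'.im * h1 - (r * z'.re + s) * h2
  have h4 : 0 < (r * z'.re + s) ^ 2 + (r * z'.im) ^ 2 := by
    by_cases hr : r = 0
    · subst hr
      have : s ≠ 0 := fun h => hne ⟨rfl, h⟩
      simp; positivity
    · positivity
  have h5 : 0 < (p * s - q * r) * z'.im := by rw [h3]; positivity
  exact pos_of_mul_pos_left h5 hz'.le

theorem inj' (F K : Type) [Field F] [Field K] [NumberField F] [NumberField K]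
    [Algebra F K] [IsPrincipalIdealRing (𝓞 F)] (τ : F →+* ℝ) (σ : K →+* ℂ)
    (hcompat : ∀ x : F, σ (algebraMap F K x) = (τ x : ℂ))
    (ωK : 𝓞 K) (hωKim : 0 < (σ ωK).im)
    (hgen : ∀ x : 𝓞 K, ∃ u v : 𝓞 F, (x : K) = iota F K u * ωK + iota F K v)
    (bK cK : 𝓞 F) (hmin : (ωK : K) ^ 2 + iota F K bK * ωK + iota F K cK = 0)
    (dK : 𝓞 F) (hdK : dK = bK ^ 2 - 4 * cK)
    (N : ℕ) (a b c a' b' c' : 𝓞 F) (ω ω' ν : K) (hQ : IsFormN F τ N dK a b c)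
    (hQ' : IsFormN F τ N dK a' b' c') (hω : IsFormRoot F K σ a b c ω)
    (hω' : IsFormRoot F K σ a' b' c' ω') (hν : ν ≠ 0) (hν1 : MulCongOne K N ν)
    (hI : ∀ x : K, (∃ u v : 𝓞 F, x = iota F K u * ω + iota F K v) ↔
        (∃ u v : 𝓞 F, x = ν * (iota F K u * ω' + iota F K v))) :
      ∃ γ : Matrix (Fin 2) (Fin 2) (𝓞 F),
        IsGammaN F τ N γ ∧ FormAct F γ a b c a' b' c' := by
  obtain ⟨-, ha, hd, -⟩ := hQ
  obtain ⟨-, ha', hd', hcop⟩ := hQ'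
  obtain ⟨B, hB⟩ := formB' F K τ σ hcompat ωK hωKim bK cK hmin dK hdK a b c ω ha hd hω
  obtain ⟨B', hB'⟩ := formB' F K τ σ hcompat ωK hωKim bK cK hmin dK hdK a' b' c' ω' ha' hd' hω'
  obtain ⟨hω, him⟩ := hω
  obtain ⟨hω', him'⟩ := hω'
  have ind := indep' F K τ σ hcompat ω' him'.ne'
  have i0 := iota_zero' F K
  have i1 := iota_one' F K
  obtain ⟨p, q, hpq⟩ := (hI ω).1 ⟨1, 0, by rw [i0, i1]; ring⟩
  obtain ⟨r, s, hrs⟩ := (hI 1).1 ⟨0, 1, by rw [i0, i1]; ring⟩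
  obtain ⟨p', q', hpq'⟩ := (hI (ν * ω')).2 ⟨1, 0, by rw [i0, i1]; ring⟩
  obtain ⟨r', s', hrs'⟩ := (hI ν).2 ⟨0, 1, by rw [i0, i1]; ring⟩
  have e1 := ind 1 0 (p' * p + q' * r) (p' * q + q' * s) (by
    simp only [iota_add', iota_mul', i0, i1]
    apply mul_left_cancel₀ hν
    linear_combination hpq' + iota F K p' * hpq + iota F K q' * hrs)
  have e2 := ind 0 1 (r' * p + s' * r) (r' * q + s' * s) (by
    simp only [iota_add', iota_mul', i0, i1]
    apply mul_left_cancel₀ hν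
    linear_combination hrs' + iota F K r' * hpq + iota F K s' * hrs)
  have hdet : (p' * s' - q' * r') * (p * s - q * r) = 1 := by
    linear_combination (-(r' * q + s' * s)) * e1.1 - e2.2 + (p' * q + q' * s) * e2.1
  have hrs0 : ¬ (r = 0 ∧ s = 0) := by
    rintro ⟨rfl, rfl⟩
    rw [i0] at hrs; simp at hrs
  have hωrs : ω * (iota F K r * ω' + iota F K s) = iota F K p * ω' + iota F K q := by
    apply mul_left_cancel₀ hν
    linear_combination hpq - ω * hrs
  have hdetpos : 0 < τ ((p * s - q * r : 𝓞 F) : F) := by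
    have := det_pos' (τ p) (τ q) (τ r) (τ s) (σ ω) (σ ω') him him' (by
      have := congrArg σ hωrs
      simpa [iota_sigma' F K τ σ hcompat] using this) (by
      rintro ⟨h1, h2⟩
      exact hrs0 ⟨by simpa using h1, by simpa using h2⟩)
    simpa using this
  have hBω : ωK * ω = iota F K (B - b) * ω - iota F K c := by
    rw [iota_sub']; linear_combination ω * hB + hω
  have hBω' : ωK * ω' = iota F K (B' - b') * ω' - iota F K c' := by
    rw [iota_sub']; linear_combination ω' * hB' + hω'
  have m1 := ind ((B - b) * p - c * r) ((B - b) * q - c * s)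
      (p * (B' - b') + q * a') (-(p * c') + q * B') (by
    apply mul_left_cancel₀ hν
    simp only [iota_add', iota_mul', iota_sub', iota_neg'] at hBω hBω' ⊢
    linear_combination (-(iota F K B - iota F K b)) * hpq + iota F K c * hrs - hBω + ωK * hpq
      + ν * iota F K p * hBω' + ν * iota F K q * hB')
  have m2 := ind (a * p + B * r) (a * q + B * s)
      (r * (B' - b') + s * a') (-(r * c') + s * B') (by
    apply mul_left_cancel₀ hν
    simp only [iota_add', iota_mul', iota_sub', iota_neg'] at hBω hBω' ⊢
    linear_combination (-(iota F K a)) * hpq - iota F K B * hrs - hB + ωK * hrs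
      + ν * iota F K r * hBω' + ν * iota F K s * hB')
  have hcong : (N : 𝓞 F) ∣ r ∧ (N : 𝓞 F) ∣ s - 1 := by
    obtain ⟨α, β, hβ0, hβ, hναβ, t, ht⟩ := hν1
    have hβ' : IsCoprime β (N : 𝓞 K) := (Ideal.isCoprime_span_singleton_iff _ _).1 hβ
    have hα : IsCoprime α (N : 𝓞 K) := by
      have : α = β + N * t := by rw [← ht]; ring
      rw [this]
      exact hβ'.add_mul_left_left t
    let j := algebraMap (𝓞 F) (𝓞 K)
    let X : 𝓞 K := j r * (ωK - j B') + j s * j a' - j a'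
    have hX : (X : K) = iota F K a' * (iota F K r * ω' + iota F K s - 1) := by
      have : (X : K) = iota F K r * (ωK - iota F K B') + iota F K s * iota F K a' - iota F K a' := by
        simp only [X, map_sub, map_mul, map_add, j, iota_coe']
      rw [this, hB']; ring
    have hαX : α * X = N * (-(t * j a')) := by
      apply RingOfIntegers.ext
      have ht' : (α : K) - β = N * t := by
        have := congrArg (algebraMap (𝓞 K) K) ht
        simpa using this
      have hβα : (α : K) * (iota F K r * ω' + iota F K s) = β := by
        rw [hναβ] at hrs
        field_simp at hrs
        exact hrs.symm
      simp only [map_mul, map_neg, map_natCast, hX, j, iota_coe']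
      linear_combination iota F K a' * hβα - iota F K a' * ht'
    have hNX : (N : 𝓞 K) ∣ X := hα.symm.dvd_of_dvd_mul_left ⟨_, hαX⟩
    obtain ⟨Y, hY⟩ := hNX
    have hY' : (X : K) = N * Y := by
      have := congrArg (algebraMap (𝓞 K) K) hY
      simpa using this
    have h1 := unit_of_dvd' F K τ σ hcompat ωK hωKim hgen (N : 𝓞 F) r (-(r * B') + s * a' - a') Y (by
      rw [iota_nat', ← hY', hX]
      simp only [iota_add', iota_mul', iota_sub', iota_neg']
      linear_combination iota F K r * hB')
    refine ⟨h1.1, ?_⟩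
    have h2 : (N : 𝓞 F) ∣ a' * (s - 1) := by
      have := dvd_add h1.2 (h1.1.mul_right B')
      ring_nf at this ⊢
      exact this
    have h3 : IsCoprime a' (N : 𝓞 F) :=
      isCoprime_of_dvd _ _ (fun h => by rw [h.1] at ha'; simp at ha')
        (fun z hz _ h4 h5 => hz (hcop z h4 h5))
    exact h3.symm.dvd_of_dvd_mul_left h2
  refine ⟨!![p, q; r, s], ⟨?_, ?_, ?_, 1, ?_⟩, ?_, ?_, ?_⟩
  · rw [Matrix.det_fin_two_of]; exact IsUnit.of_mul_eq_one_right _ hdet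
  · rw [Matrix.det_fin_two_of]; exact hdetpos
  · simpa using hcong.1
  · simpa using hcong.2
  all_goals
    rw [Matrix.det_fin_two_of]
    simp
  · linear_combination (-p) * m2.1 + r * m1.1
  · linear_combination s * m1.1 - q * m2.1 + r * m1.2 - p * m2.2
  · linear_combination s * m1.2 - q * m2.2

/-- data extracted from coprimality -/
theorem coprime_data' (K : Type) [Field K] [NumberField K] (N : ℕ)
    (I : FractionalIdeal (nonZeroDivisors (𝓞 K)) K) (h : CoprimeToN K N I) :
    ∃ β g : 𝓞 K, β ≠ 0 ∧ (N : 𝓞 K) ∣ β - 1 ∧ (N : 𝓞 K) ∣ g - 1 ∧ (g : K) ∈ I ∧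
      ∀ y ∈ I, ∃ w : 𝓞 K, (w : K) = β * y := by
  obtain ⟨b₁, b₂, h1, h2, h12⟩ := h
  obtain ⟨g, hg, n1, hn1, hg1⟩ := Ideal.isCoprime_iff_exists.1 h1
  obtain ⟨β, hβ, n2, hn2, hβ1⟩ := Ideal.isCoprime_iff_exists.1 h2
  rw [Ideal.mem_span_singleton] at hn1 hn2
  have hgI : (g : K) ∈ I := by
    have h3 : (g : K) ∈ (b₁ : FractionalIdeal (nonZeroDivisors (𝓞 K)) K) :=
      FractionalIdeal.mem_coeIdeal_of_mem _ hg
    rw [← h12] at h3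
    have h4 : I * (b₂ : FractionalIdeal (nonZeroDivisors (𝓞 K)) K) ≤ I := by
      calc I * (b₂ : FractionalIdeal (nonZeroDivisors (𝓞 K)) K) ≤ I * 1 := by
            gcongr; exact FractionalIdeal.coeIdeal_le_one
        _ = I := mul_one I
    exact h4 h3
  have hg' : (N : 𝓞 K) ∣ g - 1 := by
    have : g - 1 = - n1 := by rw [← hg1]; ring
    rw [this]; exact hn1.neg_right
  have hβ' : (N : 𝓞 K) ∣ β - 1 := by
    have : β - 1 = - n2 := by rw [← hβ1]; ring
    rw [this]; exact hn2.neg_right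
  by_cases h0 : β = 0
  · have hN : IsUnit (N : 𝓞 K) := by
      rw [h0] at hβ'
      exact isUnit_of_dvd_one (by simpa using hβ')
    obtain ⟨a, ha, haI⟩ := I.isFractional
    refine ⟨a, g, nonZeroDivisors.ne_zero ha, hN.dvd, hg', hgI, fun y hy => ?_⟩
    obtain ⟨w, hw⟩ := haI y hy
    exact ⟨w, hw.trans (Algebra.smul_def a y)⟩
  · refine ⟨β, g, h0, hβ', hg', hgI, fun y hy => ?_⟩
    have h3 : y * (β : K) ∈ I * (b₂ : FractionalIdeal (nonZeroDivisors (𝓞 K)) K) :=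
      FractionalIdeal.mul_mem_mul hy (FractionalIdeal.mem_coeIdeal_of_mem _ hβ)
    rw [h12] at h3
    obtain ⟨w, -, hw⟩ := (FractionalIdeal.mem_coeIdeal _).1 h3
    exact ⟨w, hw.trans (mul_comm _ _)⟩

theorem surj' (F K : Type) [Field F] [Field K] [NumberField F] [NumberField K]
    [Algebra F K] [IsPrincipalIdealRing (𝓞 F)] (τ : F →+* ℝ) (σ : K →+* ℂ)
    (hcompat : ∀ x : F, σ (algebraMap F K x) = (τ x : ℂ))
    (ωK : 𝓞 K) (hωKim : 0 < (σ ωK).im)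
    (hgen : ∀ x : 𝓞 K, ∃ u v : 𝓞 F, (x : K) = iota F K u * ωK + iota F K v)
    (bK cK : 𝓞 F) (hmin : (ωK : K) ^ 2 + iota F K bK * ωK + iota F K cK = 0)
    (dK : 𝓞 F) (hdK : dK = bK ^ 2 - 4 * cK)
    (N : ℕ) (hN : 0 < N)
    (I : FractionalIdeal (nonZeroDivisors (𝓞 K)) K) (hI0 : I ≠ 0) (hI : CoprimeToN K N I) :
      ∃ (a b c : 𝓞 F) (ω : K) (ν : K), IsFormN F τ N dK a b c ∧
        IsFormRoot F K σ a b c ω ∧ ν ≠ 0 ∧ MulCongOne K N ν ∧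
        ∀ x : K, (∃ u v : 𝓞 F, x = iota F K u * ω + iota F K v) ↔
          (∃ y : K, y ∈ (I : Submodule (𝓞 K) K) ∧ x = ν * y) := by
  obtain ⟨β, g, hβ0, hβ1, hg1, hgI, hβI⟩ := coprime_data' K N I hI
  let j := algebraMap (𝓞 F) (𝓞 K)
  have i0 := iota_zero' F K
  have i1 := iota_one' F K
  have indK := indep' F K τ σ hcompat ωK hωKim.ne'
  have hImul : ∀ (u : 𝓞 K) (y : K), y ∈ I → (u : K) * y ∈ I := fun u y hy => by
    have := (I : Submodule (𝓞 K) K).smul_mem u hy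
    rwa [Algebra.smul_def] at this
  have hImulF : ∀ (u : 𝓞 F) (y : K), y ∈ I → iota F K u * y ∈ I := fun u y hy =>
    hImul (j u) y hy
  have hIadd : ∀ x y : K, x ∈ I → y ∈ I → x + y ∈ I := fun x y hx hy =>
    (I : Submodule (𝓞 K) K).add_mem hx hy
  have hβK : (β : K) ≠ 0 := by simpa using hβ0
  have hNF : (N : 𝓞 F) ≠ 0 := by exact_mod_cast hN.ne'
  obtain ⟨e, f, heI, hfI, hef, hefind⟩ : ∃ e f : K, e ∈ I ∧ f ∈ I ∧
      (∀ x ∈ I, ∃ u v : 𝓞 F, x = iota F K u * e + iota F K v * f)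
      ∧ ∀ u v : 𝓞 F, iota F K u * e + iota F K v * f = 0 → u = 0 ∧ v = 0 := by
    let J : Ideal (𝓞 K) :=
      { carrier := {w | (w : K) / β ∈ I}
        zero_mem' := by
          have : (0 : K) ∈ I := (I : Submodule (𝓞 K) K).zero_mem
          simpa using this
        add_mem' := by
          intro x y hx hy
          have := hIadd _ _ hx hy
          simpa [add_div] using this
        smul_mem' := by
          intro x y hy
          have := hImul x _ hy
          simpa [mul_div_assoc] using this }
    have hJ : J ≠ ⊥ := by
      obtain ⟨y, hyI, hy0⟩ : ∃ y ∈ I, y ≠ 0 := by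
        by_contra! hcon
        exact hI0 (FractionalIdeal.eq_zero_iff.2 hcon)
      obtain ⟨w, hw⟩ := hβI y hyI
      have hwJ : w ∈ J := by
        change (w : K) / β ∈ I
        rw [hw, mul_div_cancel_left₀ _ hβK]; exact hyI
      intro hbot
      rw [hbot] at hwJ
      have : w = 0 := by simpa using hwJ
      rw [this] at hw
      simp [hβ0, hy0] at hw
    obtain ⟨e, f, he, hf, hef, hind⟩ := lattice' F K τ σ hcompat ωK hωKim hgen J hJ
    refine ⟨e / β, f / β, he, hf, ?_, ?_⟩
    · intro x hx
      obtain ⟨w, hw⟩ := hβI x hx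
      have hwJ : w ∈ J := by
        change (w : K) / β ∈ I
        rw [hw, mul_div_cancel_left₀ _ hβK]; exact hx
      obtain ⟨u, v, huv⟩ := hef w hwJ
      refine ⟨u, v, ?_⟩
      rw [hw] at huv
      field_simp
      linear_combination huv
    · intro u v huv
      apply hind
      field_simp at huv
      linear_combination huv
  obtain ⟨x, y, hxy⟩ := hef g hgI
  have hgcd : ∀ d, d ∣ x → d ∣ y → d ∣ (N : 𝓞 F) → IsUnit d := by
    rintro d ⟨x, rfl⟩ ⟨y, rfl⟩ ⟨n, hn⟩
    obtain ⟨w, hw⟩ := hβI _ (hIadd _ _ (hImulF x e heI) (hImulF y f hfI))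
    have h1 : (N : 𝓞 K) ∣ β * g - 1 := by
      have : β * g - 1 = (β - 1) * g + (g - 1) := by ring
      rw [this]
      exact dvd_add (hβ1.mul_right g) hg1
    obtain ⟨t, ht⟩ := h1
    have ht' : (β : K) * g - 1 = N * t := by
      have := congrArg (algebraMap (𝓞 K) K) ht
      simpa using this
    have hn' : (N : K) = iota F K d * iota F K n := by
      rw [← iota_mul', ← hn, iota_nat']
    have h2 := unit_of_dvd' F K τ σ hcompat ωK hωKim hgen d 0 1 (w - j n * t) (by
      simp only [map_sub, map_mul, j, iota_coe', i0, i1]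
      simp only [iota_mul'] at hxy
      linear_combination β * hxy - iota F K d * hw - ht' - t * hn')
    exact isUnit_of_dvd_one h2.2
  obtain ⟨s, t, p, q, hpq⟩ := approx2' x y (N : 𝓞 F) hNF hgcd
  set xt := x + (N : 𝓞 F) * s with hx'
  set yt := y + (N : 𝓞 F) * t with hy'
  obtain ⟨l, hl⟩ : ∃ l, l = iota F K xt * e + iota F K yt * f := ⟨_, rfl⟩
  obtain ⟨m, hm⟩ : ∃ m, m = -iota F K q * e + iota F K p * f := ⟨_, rfl⟩
  have hpqK : iota F K p * iota F K xt + iota F K q * iota F K yt = 1 := by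
    rw [← iota_mul', ← iota_mul', ← iota_add', hpq, i1]
  have hlI : l ∈ I := hl ▸ hIadd _ _ (hImulF _ _ heI) (hImulF _ _ hfI)
  have hmI : m ∈ I := by
    rw [hm, ← iota_neg']; exact hIadd _ _ (hImulF _ _ heI) (hImulF _ _ hfI)
  have hlm : ∀ z ∈ I, ∃ u v : 𝓞 F, z = iota F K u * m + iota F K v * l := by
    intro z hz
    obtain ⟨u, v, rfl⟩ := hef z hz
    refine ⟨v * xt - u * yt, u * p + v * q, ?_⟩
    rw [hm, hl]
    simp only [iota_add', iota_mul', iota_sub']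
    linear_combination (-(iota F K u * e + iota F K v * f)) * hpqK
  have hlmind : ∀ u v : 𝓞 F, iota F K u * m + iota F K v * l = 0 → u = 0 ∧ v = 0 := by
    intro u v huv
    have h1 := hefind (-(u * q) + v * xt) (u * p + v * yt) (by
      rw [← huv, hm, hl]
      simp only [iota_add', iota_mul', iota_neg']
      ring)
    constructor
    · linear_combination xt * h1.2 - yt * h1.1 - u * hpq
    · linear_combination p * h1.1 + q * h1.2 - v * hpq
  have hl0 : l ≠ 0 := by
    rintro h
    have := (hlmind 0 1 (by rw [i0, h]; ring)).2
    exact one_ne_zero this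
  obtain ⟨w, hw⟩ := hβI l hlI
  have hw0 : (w : K) ≠ 0 := by rw [hw]; exact mul_ne_zero hβK hl0
  have hw1 : (N : 𝓞 K) ∣ w - 1 := by
    obtain ⟨k, hk⟩ := hβI _ (hIadd _ _ (hImulF s e heI) (hImulF t f hfI))
    have : w - 1 = (β - 1) * g + (g - 1) + N * k := by
      apply RingOfIntegers.ext
      simp only [map_sub, map_add, map_mul, map_one, map_natCast, hw, hk, hl, hx', hy', iota_add',
        iota_mul', iota_nat']
      linear_combination (-(β : K)) * hxy
    rw [this]
    exact dvd_add (dvd_add (hβ1.mul_right g) hg1) (dvd_mul_right _ _)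
  have hwN : IsCoprime w (N : 𝓞 K) := by
    obtain ⟨k, hk⟩ := hw1
    exact ⟨1, -k, by linear_combination hk⟩
  have him0 : (σ (m / l)).im ≠ 0 := by
    intro him
    obtain ⟨A, D, hAD⟩ := IsFractionRing.div_surjective (A := 𝓞 K) (m / l)
    obtain ⟨hD, hAD⟩ := hAD
    have hD0 : D ≠ 0 := nonZeroDivisors.ne_zero hD
    have hcomap : (Ideal.span {D}).comap j ≠ ⊥ :=
      Ideal.IsIntegral.comap_ne_bot (𝓞 F) (by simpa using hD0)
    obtain ⟨n, hn, hn0⟩ := Submodule.exists_mem_ne_zero_of_ne_bot hcomap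
    obtain ⟨E, hE⟩ := Ideal.mem_span_singleton.1 hn
    have hE' : iota F K n = D * E := by
      have := congrArg (algebraMap (𝓞 K) K) hE
      rw [← iota_coe']
      simpa using this
    obtain ⟨u, v, huv⟩ := hgen (A * E)
    have hDK : (D : K) ≠ 0 := by simpa using hD0
    have hkey : iota F K n * (m / l) = iota F K u * ωK + iota F K v := by
      have hAE : ((A * E : 𝓞 K) : K) = A * E := map_mul (algebraMap (𝓞 K) K) A E
      have hAD' : (A : K) / D = m / l := hAD
      rw [← huv, hE', ← hAD', hAE]
      field_simp
    have h1 := congrArg (fun t => (σ t).im) hkey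
    simp only [map_add, map_mul, iota_sigma' F K τ σ hcompat] at h1
    simp only [Complex.add_im, Complex.mul_im, Complex.ofReal_re, Complex.ofReal_im, him] at h1
    simp [hωKim.ne'] at h1
    rw [h1, i0] at hkey
    have h2 := (hlmind n (-v) (by
      rw [iota_neg']
      field_simp at hkey
      linear_combination hkey)).1
    exact hn0 h2
  obtain ⟨mt, hmtI, hlmt, him'⟩ : ∃ mt ∈ I,
      (∀ z ∈ I, ∃ u v : 𝓞 F, z = iota F K u * mt + iota F K v * l) ∧ 0 < (σ (mt / l)).im := by
    rcases lt_or_gt_of_ne him0 with h | h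
    · refine ⟨-m, (I : Submodule (𝓞 K) K).neg_mem hmI, ?_, ?_⟩
      · intro z hz
        obtain ⟨u, v, huv⟩ := hlm z hz
        exact ⟨-u, v, by rw [huv, iota_neg']; ring⟩
      · rw [neg_div, map_neg, Complex.neg_im]; linarith
    · exact ⟨m, hmI, hlm, h⟩
  obtain ⟨ω, hω⟩ : ∃ ω, ω = mt / l := ⟨_, rfl⟩
  rw [← hω] at him'
  have hmo : mt = ω * l := by rw [hω]; field_simp
  have ind := indep' F K τ σ hcompat ω him'.ne'
  obtain ⟨A, B, hAB⟩ := hlmt _ (hImul ωK l hlI)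
  obtain ⟨C, D, hCD⟩ := hlmt _ (hImul ωK mt hmtI)
  have hAB' : (ωK : K) = iota F K A * ω + iota F K B := by
    apply mul_right_cancel₀ hl0
    rw [hAB, hmo]; ring
  have hCD' : ωK * ω = iota F K C * ω + iota F K D := by
    apply mul_right_cancel₀ hl0
    rw [hmo] at hCD
    linear_combination hCD
  have hA : 0 < τ (A : F) := by
    have h1 := congrArg (fun t => (σ t).im) hAB'
    simp only [map_add, map_mul, iota_sigma' F K τ σ hcompat] at h1
    simp only [Complex.add_im, Complex.mul_im, Complex.ofReal_re, Complex.ofReal_im] at h1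
    simp at h1
    rw [h1] at hωKim
    exact pos_of_mul_pos_left hωKim him'.le
  have hA0 : A ≠ 0 := by rintro rfl; simp at hA
  have htr := indK (-bK) (-cK) (B + C) (A * D - B * C) (by
    simp only [iota_add', iota_mul', iota_sub', iota_neg']
    linear_combination (-1 : K) * hmin + (ωK - iota F K C) * hAB' + iota F K A * hCD')
  have hroot : iota F K A * ω ^ 2 + iota F K (B - C) * ω + iota F K (-D) = 0 := by
    simp only [iota_sub', iota_neg']
    linear_combination hCD' - ω * hAB'
  have hwω : ∃ k : 𝓞 K, (k : K) = w * ω := by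
    obtain ⟨k, hk⟩ := hβI mt hmtI
    exact ⟨k, by rw [hk, hmo, hw]; ring⟩
  refine ⟨A, B - C, -D, ω, 1 / l, ⟨?_, hA, ?_, ?_⟩, ⟨hroot, him'⟩, one_div_ne_zero hl0, ?_, ?_⟩
  · rintro d ⟨At, rfl⟩ ⟨E, hE⟩ ⟨Dt, hD'⟩
    have hd0 : iota F K d ≠ 0 := by
      intro h
      have : d = 0 := iota_inj' F K _ _ (by rw [h, i0])
      rw [this] at hA0; simp at hA0
    have hEK : iota F K B - iota F K C = iota F K d * iota F K E := by
      rw [← iota_sub', hE, iota_mul']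
    have hDK : -iota F K D = iota F K d * iota F K Dt := by
      rw [← iota_neg', hD', iota_mul']
    let ρ : K := iota F K At * ω + iota F K E
    have hρ : ωK - iota F K C = iota F K d * ρ := by
      rw [hAB']; simp only [ρ, iota_mul']; linear_combination hEK
    have hρω : ρ * ω = - iota F K Dt := by
      apply mul_left_cancel₀ hd0
      linear_combination hCD' - ω * hρ - hDK
    have hρint : IsIntegral (𝓞 F) ρ := by
      refine ⟨Polynomial.X ^ 2 + Polynomial.C (-E) * Polynomial.X + Polynomial.C (At * Dt), ?_, ?_⟩
      · monicity!
      · have e : ∀ u : 𝓞 F, algebraMap (𝓞 F) K u = iota F K u := fun _ => rfl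
        simp only [Polynomial.eval₂_add, Polynomial.eval₂_mul, Polynomial.eval₂_pow,
          Polynomial.eval₂_X, Polynomial.eval₂_C, e, iota_mul', iota_neg']
        have : ρ ^ 2 = ρ * (iota F K At * ω + iota F K E) := sq ρ
        rw [this]
        linear_combination (iota F K At) * hρω
    have hρ' : IsIntegral ℤ ρ := isIntegral_trans (A := 𝓞 F) _ hρint
    have h2 := unit_of_dvd' F K τ σ hcompat ωK hωKim hgen d 1 (-C) ⟨ρ, hρ'⟩ (by
      change _ = iota F K d * ρ
      rw [← hρ, i1, iota_neg']; ring)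
    exact isUnit_of_dvd_one h2.1
  · rw [hdK]
    linear_combination (-(B + C) + bK) * htr.1 - 4 * htr.2
  · rintro d ⟨At, hA'⟩ ⟨n, hn⟩
    obtain ⟨k, hk⟩ := hwω
    obtain ⟨r, hr⟩ := hw1
    have hr' : (w : K) - 1 = N * r := by
      have := congrArg (algebraMap (𝓞 K) K) hr
      simpa using this
    have hn' : (N : K) = iota F K d * iota F K n := by
      rw [← iota_mul', ← hn, iota_nat']
    have hA'' : iota F K A = iota F K d * iota F K At := by
      rw [← iota_mul', ← hA']
    have h2 := unit_of_dvd' F K τ σ hcompat ωK hωKim hgen d 1 (-B)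
        (j At * k - j n * r * (ωK - j B)) (by
      simp only [map_sub, map_mul, j, iota_coe', i1, iota_neg']
      linear_combination (-(ωK - iota F K B)) * hr' - r * (ωK - iota F K B) * hn' + w * hAB'
        + w * ω * hA'' - iota F K d * iota F K At * hk)
    exact isUnit_of_dvd_one h2.1
  · refine ⟨β, w, hw0, (Ideal.isCoprime_span_singleton_iff _ _).2 hwN, ?_, ?_⟩
    · rw [hw]; field_simp
    · have : β - w = (β - 1) - (w - 1) := by ring
      rw [this]; exact dvd_sub hβ1 hw1
  · intro z
    constructor
    · rintro ⟨u, v, rfl⟩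
      refine ⟨iota F K u * mt + iota F K v * l, hIadd _ _ (hImulF _ _ hmtI) (hImulF _ _ hlI), ?_⟩
      rw [hmo]; field_simp
    · rintro ⟨y, hy, rfl⟩
      obtain ⟨u, v, rfl⟩ := hlmt y hy
      refine ⟨u, v, ?_⟩
      rw [hmo]; field_simp

end helpers

/-- the map `φ_{K,N} : C_F(N,d_K) → C(N·O_K)`, `[Q] ↦ [[ω_Q,1]_F]`,
is surjective; together with its injectivity it is a bijection onto the ray
class group. -/
theorem stmt10 (F K : Type) [Field F] [Field K] [NumberField F] [NumberField K]
    [Algebra F K] (τ : F →+* ℝ) (σ : K →+* ℂ)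
    (hcompat : ∀ x : F, σ (algebraMap F K x) = (τ x : ℂ))
    (hF_totallyReal : ∀ φ : F →+* ℂ, ∀ x : F, (φ x).im = 0)
    (hquadratic : Module.finrank F K = 2)
    (hclass : NumberField.classNumber F = 1)
    (ωK : K) (hωKint : IsIntegral ℤ ωK) (hωKim : 0 < (σ ωK).im)
    (hgen : ∀ x : 𝓞 K, ∃ u v : 𝓞 F, (x : K) = iota F K u * ωK + iota F K v)
    (bK cK : 𝓞 F) (hmin : ωK ^ 2 + iota F K bK * ωK + iota F K cK = 0)
    (dK : 𝓞 F) (hdK : dK = bK ^ 2 - 4 * cK)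
    (N : ℕ) (hN : 0 < N) :
    -- surjectivity: every ray class modulo N·O_K contains an ideal of the
    -- form [ω_Q, 1]_F for some Q ∈ Q_F(N, d_K)
    (∀ I : FractionalIdeal (nonZeroDivisors (𝓞 K)) K, I ≠ 0 → CoprimeToN K N I →
      ∃ (a b c : 𝓞 F) (ω : K) (ν : K), IsFormN F τ N dK a b c ∧
        IsFormRoot F K σ a b c ω ∧ ν ≠ 0 ∧ MulCongOne K N ν ∧
        ∀ x : K, (∃ u v : 𝓞 F, x = iota F K u * ω + iota F K v) ↔
          (∃ y : K, y ∈ (I : Submodule (𝓞 K) K) ∧ x = ν * y)) ∧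
    -- injectivity: two forms whose associated ideals lie in the same ray class
    -- are Γ_{F,1}(N)-equivalent
    (∀ (a b c a' b' c' : 𝓞 F) (ω ω' ν : K), IsFormN F τ N dK a b c →
      IsFormN F τ N dK a' b' c' → IsFormRoot F K σ a b c ω →
      IsFormRoot F K σ a' b' c' ω' → ν ≠ 0 → MulCongOne K N ν →
      (∀ x : K, (∃ u v : 𝓞 F, x = iota F K u * ω + iota F K v) ↔
        (∃ u v : 𝓞 F, x = ν * (iota F K u * ω' + iota F K v))) →
      ∃ γ : Matrix (Fin 2) (Fin 2) (𝓞 F),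
        IsGammaN F τ N γ ∧ FormAct F γ a b c a' b' c') := by

  have : IsPrincipalIdealRing (𝓞 F) := NumberField.classNumber_eq_one_iff.1 hclass
  exact ⟨fun I h0 h => surj' F K τ σ hcompat ⟨ωK, hωKint⟩ hωKim hgen bK cK hmin dK hdK N hN I h0 h,
    fun a b c a' b' c' ω ω' ν h1 h2 h3 h4 h5 h6 h7 =>
      inj' F K τ σ hcompat ⟨ωK, hωKint⟩ hωKim hgen bK cK hmin dK hdK N a b c a' b' c' ω ω' ν
        h1 h2 h3 h4 h5 h6 h7⟩
end
end

section
/- Let Q = ax²+bxy+cy² ∈ Q_F⁺(N, d_K), C = φ_{K,N}([Q]) ∈ C(N·O_K), and e = |(O_F/N·O_F)^×|. Then 𝔠 = a^e·(O_F·ω_Q + O_F) is an integral ideal of O_K in the ray class C, 𝔠·conj(𝔠) = a^{2e−1}·O_F·O_K, and 𝔠⁻¹ = a^{1−e}·(O_F·(−conj(ω_Q)) + O_F). -/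
open NumberField Complex

noncomputable section

/-- Total positivity of an element of `O_F` (at all real embeddings of the
totally real field `F`). -/
def TotPos (F : Type) [Field F] [NumberField F] (x : 𝓞 F) : Prop :=
  ∀ τ' : F →+* ℝ, 0 < τ' (x : F)

theorem stmt19 (F K : Type) [Field F] [Field K] [NumberField F] [NumberField K]
    [Algebra F K] (τ : F →+* ℝ) (σ : K →+* ℂ)
    (hcompat : ∀ x : F, σ (algebraMap F K x) = (τ x : ℂ))
    (hF_totallyReal : ∀ φ : F →+* ℂ, ∀ x : F, (φ x).im = 0)
    (hquadratic : Module.finrank F K = 2)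
    (hnarrow : ∀ I : Ideal (𝓞 F), I ≠ ⊥ →
      ∃ x : 𝓞 F, TotPos F x ∧ I = Ideal.span {x})
    (ωK : K) (hωKint : IsIntegral ℤ ωK) (hωKim : 0 < (σ ωK).im)
    (hgen : ∀ x : 𝓞 K, ∃ u v : 𝓞 F, (x : K) = iota F K u * ωK + iota F K v)
    (bK cK : 𝓞 F) (hmin : ωK ^ 2 + iota F K bK * ωK + iota F K cK = 0)
    (dK : 𝓞 F) (hdK : dK = bK ^ 2 - 4 * cK)
    -- conj : complex conjugation on K
    (conj : K ≃ₐ[F] K)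
    (hσconj : ∀ x : K, σ (conj x) = starRingEnd ℂ (σ x))
    (N : ℕ) (hN : 0 < N)
    -- Q ∈ Q_F⁺(N, d_K) with root ω_Q = ω
    (a b c : 𝓞 F) (hQ : IsFormN F τ N dK a b c) (haPos : TotPos F a)
    (ω : K) (hω : IsFormRoot F K σ a b c ω)
    -- e = |(O_F/N·O_F)^×|
    (e : ℕ) (he : e = Nat.card ((𝓞 F ⧸ Ideal.span {(N : 𝓞 F)})ˣ))
    -- J : the fractional ideal 𝔠 = a^e·(O_F·ω_Q + O_F)
    (J : FractionalIdeal (nonZeroDivisors (𝓞 K)) K)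
    (hJ : ∀ x : K, x ∈ (J : Submodule (𝓞 K) K) ↔
      ∃ u v : 𝓞 F, x = iota F K (a ^ e) * (iota F K u * ω + iota F K v)) :
    -- 𝔠 is an integral ideal of O_K lying in the ray class of [ω_Q, 1]_F
    (∃ I : Ideal (𝓞 K), J = (I : FractionalIdeal (nonZeroDivisors (𝓞 K)) K)) ∧
    MulCongOne K N (iota F K (a ^ e)) ∧
    -- 𝔠 · conj(𝔠) = a^{2e-1}·O_K
    (∀ Jc : FractionalIdeal (nonZeroDivisors (𝓞 K)) K,
      (∀ x : K, x ∈ (Jc : Submodule (𝓞 K) K) ↔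
        ∃ y : K, y ∈ (J : Submodule (𝓞 K) K) ∧ x = conj y) →
      J * Jc = FractionalIdeal.spanSingleton (nonZeroDivisors (𝓞 K))
        ((iota F K a) ^ (2 * e - 1))) ∧
    -- 𝔠⁻¹ = a^{1-e}·(O_F·(−conj ω_Q) + O_F)
    (∀ x : K, x ∈ ((J⁻¹ : FractionalIdeal (nonZeroDivisors (𝓞 K)) K) :
        Submodule (𝓞 K) K) ↔
      ∃ u v : 𝓞 F, x = (iota F K a) ^ ((1 : ℤ) - e) *
        (iota F K u * (-(conj ω)) + iota F K v)) := by
  classical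
  -- basic facts on iota
  have i_add : ∀ u v : 𝓞 F, iota F K (u + v) = iota F K u + iota F K v := by
    intro u v; simp [iota]
  have i_mul : ∀ u v : 𝓞 F, iota F K (u * v) = iota F K u * iota F K v := by
    intro u v; simp [iota]
  have i_pow : ∀ (u : 𝓞 F) (n : ℕ), iota F K (u ^ n) = iota F K u ^ n := by
    intro u n; simp [iota]
  have i_neg : ∀ u : 𝓞 F, iota F K (-u) = - iota F K u := by
    intro u; simp [iota]
  have i_one : iota F K 1 = 1 := by simp [iota]
  have i_zero : iota F K 0 = 0 := by simp [iota]
  have i_int : ∀ u : 𝓞 F, IsIntegral ℤ (iota F K u) := by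
    intro u
    have h : IsIntegral ℤ (u : F) := RingOfIntegers.isIntegral_coe u
    exact h.map (algebraMap F K).toIntAlgHom
  have i_conj : ∀ u : 𝓞 F, conj (iota F K u) = iota F K u := by
    intro u; exact conj.commutes _
  have conj_conj : ∀ x : K, conj (conj x) = x := by
    intro x
    apply σ.injective
    simp [hσconj]
  have conj_int : ∀ x : K, IsIntegral ℤ x → IsIntegral ℤ (conj x) := by
    intro x hx
    exact hx.map (conj : K →+* K).toIntAlgHom
  obtain ⟨hprim, haτ, hdisc, hcop⟩ := hQ
  obtain ⟨hroot, him⟩ := hω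
  have ha0 : a ≠ 0 := by
    rintro rfl
    simp at haτ
  have hA0 : iota F K a ≠ 0 := by
    simpa [iota] using ha0
  -- roots
  have hroot' : iota F K a * (conj ω) ^ 2 + iota F K b * conj ω + iota F K c = 0 := by
    have := congrArg conj hroot
    simpa [i_conj] using this
  have hne : ω - conj ω ≠ 0 := by
    intro h
    have h1 : σ ω = starRingEnd ℂ (σ ω) := by
      rw [← hσconj, ← sub_eq_zero.mp h]
    have h2 := congrArg Complex.im h1
    simp at h2
    linarith
  have hsum : iota F K b = -(iota F K a * (ω + conj ω)) := by
    have : (ω - conj ω) * (iota F K a * (ω + conj ω) + iota F K b) = 0 := by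
      linear_combination hroot - hroot'
    have := (mul_eq_zero.mp this).resolve_left hne
    linear_combination this
  have hprod : iota F K c = iota F K a * ω * conj ω := by
    rw [hsum] at hroot
    linear_combination hroot
  have haω : IsIntegral ℤ (iota F K a * ω) := by
    have hA' : IsIntegral (integralClosure ℤ K) (iota F K a * ω) := by
      refine ⟨Polynomial.X ^ 2 + (Polynomial.C ⟨iota F K b, i_int b⟩ * Polynomial.X
        + Polynomial.C ⟨iota F K (a * c), i_int _⟩), ?_, ?_⟩
      · apply Polynomial.monic_X_pow_add
        refine lt_of_le_of_lt Polynomial.degree_linear_le (by norm_num)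
      · simp only [Polynomial.eval₂_add, Polynomial.eval₂_mul, Polynomial.eval₂_pow,
          Polynomial.eval₂_X, Polynomial.eval₂_C]
        change (iota F K a * ω) ^ 2 + (iota F K b * (iota F K a * ω) + iota F K (a * c)) = 0
        rw [i_mul]
        linear_combination iota F K a * hroot
    exact isIntegral_trans _ hA'
  have haω' : IsIntegral ℤ (iota F K a * conj ω) := by
    have := conj_int _ haω
    simpa [i_conj] using this
  -- Bezout
  obtain ⟨r, s, t, hbez⟩ : ∃ r s t : 𝓞 F, r * a + s * b + t * c = 1 := by
    have hI : Ideal.span {a, b, c} ≠ (⊥ : Ideal (𝓞 F)) := by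
      intro h
      exact ha0 (by simpa [h] using (Ideal.subset_span (by simp) : a ∈ Ideal.span {a, b, c}))
    obtain ⟨x, -, hx⟩ := hnarrow _ hI
    have key : ∀ y ∈ ({a, b, c} : Set (𝓞 F)), x ∣ y := by
      intro y hy
      rw [← Ideal.mem_span_singleton, ← hx]
      exact Ideal.subset_span hy
    have hu := hprim x (key a (by simp)) (key b (by simp)) (key c (by simp))
    have h1 : (1 : 𝓞 F) ∈ Ideal.span {a, b, c} := by
      rw [hx, Ideal.span_singleton_eq_top.mpr hu]; trivial
    obtain ⟨r, z, hz, h⟩ := Ideal.mem_span_insert.mp h1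
    obtain ⟨s, t, h'⟩ := Ideal.mem_span_pair.mp hz
    exact ⟨r, s, t, by rw [h, ← h']; ring⟩
  obtain ⟨p, q, hpq⟩ : ∃ p q : 𝓞 F, p * a + q * (N : 𝓞 F) = 1 := by
    have hI : Ideal.span {a, (N : 𝓞 F)} ≠ (⊥ : Ideal (𝓞 F)) := by
      intro h
      exact ha0 (by simpa [h] using
        (Ideal.subset_span (by simp) : a ∈ Ideal.span {a, (N : 𝓞 F)}))
    obtain ⟨x, -, hx⟩ := hnarrow _ hI
    have key : ∀ y ∈ ({a, (N : 𝓞 F)} : Set (𝓞 F)), x ∣ y := by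
      intro y hy
      rw [← Ideal.mem_span_singleton, ← hx]
      exact Ideal.subset_span hy
    have hu := hcop x (key a (by simp)) (key _ (by simp))
    have h1 : (1 : 𝓞 F) ∈ Ideal.span {a, (N : 𝓞 F)} := by
      rw [hx, Ideal.span_singleton_eq_top.mpr hu]; trivial
    exact Ideal.mem_span_pair.mp h1
  have hbezK : iota F K r * iota F K a + iota F K s * iota F K b
      + iota F K t * iota F K c = 1 := by
    rw [← i_mul, ← i_mul, ← i_mul, ← i_add, ← i_add, hbez, i_one]
  have hNspan : Ideal.span {(N : 𝓞 F)} ≠ ⊥ := by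
    simpa using hN.ne'
  haveI : Finite (𝓞 F ⧸ Ideal.span {(N : 𝓞 F)}) := Ideal.finiteQuotientOfFreeOfNeBot _ hNspan
  have he1 : 1 ≤ e := by
    rw [he]; exact Nat.card_pos
  obtain ⟨n, rfl⟩ : ∃ n, e = n + 1 := ⟨e - 1, by omega⟩
  have hcong : (N : 𝓞 F) ∣ a ^ (n + 1) - 1 := by
    have hmul : (Ideal.Quotient.mk (Ideal.span {(N : 𝓞 F)}) a) *
        (Ideal.Quotient.mk (Ideal.span {(N : 𝓞 F)}) p) = 1 := by
      rw [← map_mul, ← map_one (Ideal.Quotient.mk (Ideal.span {(N : 𝓞 F)})),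
        Ideal.Quotient.eq, Ideal.mem_span_singleton]
      exact ⟨-q, by linear_combination hpq⟩
    let U : (𝓞 F ⧸ Ideal.span {(N : 𝓞 F)})ˣ := Units.mkOfMulEqOne _ _ hmul
    have hU : U ^ (n + 1) = 1 := by rw [he]; exact pow_card_eq_one'
    have hU' := congrArg Units.val hU
    rw [← Ideal.mem_span_singleton, ← Ideal.Quotient.eq, map_pow, map_one]
    simpa [U] using hU'
  set A := iota F K a with hA
  set W := conj ω with hW
  have hmemJ : ∀ u v : 𝓞 F, A ^ (n + 1) * (iota F K u * ω + iota F K v) ∈ J := by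
    intro u v
    exact (hJ _).mpr ⟨u, v, by rw [i_pow]⟩
  have hJint : ∀ x ∈ J, IsIntegral ℤ x := by
    intro x hx
    obtain ⟨u, v, rfl⟩ := (hJ x).mp hx
    rw [i_pow]
    have : A ^ (n + 1) * (iota F K u * ω + iota F K v)
        = A ^ n * (iota F K u * (A * ω) + iota F K v * A) := by ring
    rw [this]
    exact ((i_int a).pow n).mul (((i_int u).mul haω).add ((i_int v).mul (i_int a)))
  have h1J : A ^ (n + 1) ∈ J := by simpa [i_zero, i_one] using hmemJ 0 1
  have h2J : A ^ (n + 1) * ω ∈ J := by simpa [i_zero, i_one] using hmemJ 1 0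
  have hJ0 : J ≠ 0 := by
    rintro rfl
    rw [FractionalIdeal.mem_zero_iff] at h1J
    exact pow_ne_zero _ hA0 h1J
  have hmem1 : ∀ x : K, x ∈ (1 : FractionalIdeal (nonZeroDivisors (𝓞 K)) K)
      ↔ IsIntegral ℤ x := by
    intro x
    rw [FractionalIdeal.mem_one_iff]
    constructor
    · rintro ⟨y, rfl⟩
      exact RingOfIntegers.isIntegral_coe y
    · intro hx
      exact ⟨⟨x, hx⟩, rfl⟩
  have hlift : ∀ x : K, IsIntegral ℤ x → ∃ y : 𝓞 K, algebraMap (𝓞 K) K y = x :=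
    fun x hx => ⟨⟨x, hx⟩, rfl⟩
  have conjA : conj A = A := i_conj a
  have hJsmul : ∀ x y : K, IsIntegral ℤ x → y ∈ J → x * y ∈ J := by
    intro x y hx hy
    obtain ⟨z, rfl⟩ := hlift x hx
    rw [← Algebra.smul_def]
    exact (J : Submodule (𝓞 K) K).smul_mem z hy
  have hJadd : ∀ x y : K, x ∈ J → y ∈ J → x + y ∈ J := by
    intro x y hx hy
    exact (J : Submodule (𝓞 K) K).add_mem hx hy
  refine ⟨?_, ?_, ?_, ?_⟩
  · obtain ⟨I, hI⟩ := FractionalIdeal.le_one_iff_exists_coeIdeal.mp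
      (show J ≤ 1 from fun x hx => (hmem1 x).mpr (hJint x hx))
    exact ⟨I, hI.symm⟩
  · obtain ⟨k, hk⟩ := hcong
    obtain ⟨α, hα⟩ := hlift _ (i_int (a ^ (n + 1)))
    obtain ⟨κ, hκ⟩ := hlift _ (i_int k)
    refine ⟨α, 1, by simp, ?_, by simp [hα], ⟨κ, ?_⟩⟩
    · simp [Ideal.isCoprime_iff_add, ← Ideal.one_eq_top]
    · apply RingOfIntegers.ext
      have h : a ^ (n + 1) = N * k + 1 := by linear_combination hk
      change algebraMap (𝓞 K) K (α - 1) = algebraMap (𝓞 K) K (N * κ)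
      rw [map_sub, map_mul, hα, hκ, h]
      simp [iota]
  · intro Jc hJc
    have hexp : 2 * (n + 1) - 1 = 2 * n + 1 := by omega
    rw [hexp]
    have hc1 : A ^ (n + 1) ∈ Jc :=
      (hJc _).mpr ⟨_, h1J, by rw [map_pow, hA, i_conj]⟩
    have hc2 : A ^ (n + 1) * W ∈ Jc :=
      (hJc _).mpr ⟨_, h2J, by rw [map_mul, map_pow, hA, i_conj]⟩
    apply le_antisymm
    · rw [FractionalIdeal.mul_le]
      intro x hx y hy
      obtain ⟨u, v, rfl⟩ := (hJ x).mp hx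
      obtain ⟨z, hz, rfl⟩ := (hJc y).mp hy
      obtain ⟨u', v', rfl⟩ := (hJ z).mp hz
      rw [FractionalIdeal.mem_spanSingleton]
      have hint : IsIntegral ℤ (iota F K u * iota F K u' * iota F K c
          + iota F K u * iota F K v' * (A * ω) + iota F K v * iota F K u' * (A * W)
          + iota F K v * iota F K v' * A) :=
        (((((i_int u).mul (i_int u')).mul (i_int c)).add
          (((i_int u).mul (i_int v')).mul haω)).add
          (((i_int v).mul (i_int u')).mul haω')).add
          (((i_int v).mul (i_int v')).mul (i_int a))
      obtain ⟨z, hz'⟩ := hlift _ hint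
      refine ⟨z, ?_⟩
      rw [Algebra.smul_def, hz']
      simp only [map_mul, map_add, map_pow, i_conj, i_pow, ← hW, ← hA, conjA]
      rw [hprod]
      ring
    · rw [FractionalIdeal.spanSingleton_le_iff_mem]
      have m11 := FractionalIdeal.mul_mem_mul h1J hc1
      have m12 := FractionalIdeal.mul_mem_mul h1J hc2
      have m21 := FractionalIdeal.mul_mem_mul h2J hc1
      have m22 := FractionalIdeal.mul_mem_mul h2J hc2
      have hs : ∀ (u : 𝓞 F) (y : K), y ∈ J * Jc → iota F K u * y ∈ J * Jc := by
        intro u y hy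
        obtain ⟨z, hz⟩ := hlift _ (i_int u)
        rw [← hz, ← Algebra.smul_def]
        exact ((J * Jc : FractionalIdeal _ K) : Submodule (𝓞 K) K).smul_mem z hy
      have hadd : ∀ x y : K, x ∈ J * Jc → y ∈ J * Jc → x + y ∈ J * Jc := fun x y hx hy =>
        ((J * Jc : FractionalIdeal _ K) : Submodule (𝓞 K) K).add_mem hx hy
      have hfin := hadd _ _ (hadd _ _ (hs r _ m11) (hs (-s) _ (hadd _ _ m12 m21))) (hs t _ m22)
      convert hfin using 1
      rw [hsum, hprod] at hbezK
      rw [i_neg]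
      linear_combination (-A ^ (2 * n + 1)) * hbezK
  · intro x
    have hz : A ^ ((1 : ℤ) - ((n + 1 : ℕ) : ℤ)) = (A ^ n)⁻¹ := by
      rw [show (1 : ℤ) - ((n + 1 : ℕ) : ℤ) = -(n : ℤ) by push_cast; ring, zpow_neg, zpow_natCast]
    rw [hz]
    have hAn : A ^ n ≠ 0 := pow_ne_zero _ hA0
    change x ∈ J⁻¹ ↔ _
    rw [FractionalIdeal.mem_inv_iff hJ0]
    constructor
    · intro hx
      have p1 := (hmem1 _).mp (hx _ h1J)
      have p2 := (hmem1 _).mp (hx _ h2J)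
      have hq1 := ((i_int r).mul p1).sub ((i_int s).mul p2)
      have hq2 := ((i_int t).mul p2).sub ((i_int s).mul p1)
      have hm := hJadd _ _ (hJsmul _ _ (conj_int _ hq1) h1J) (hJsmul _ _ (conj_int _ hq2) h2J)
      obtain ⟨u, v, huv⟩ := (hJ _).mp hm
      have huv' := congrArg conj huv
      rw [map_add, map_mul, conj_conj, map_mul conj (conj _), conj_conj] at huv'
      simp only [map_mul, map_add, map_pow, i_conj, i_pow, ← hW, ← hA, conjA] at huv'
      refine ⟨-u, v, ?_⟩
      rw [i_neg, eq_inv_mul_iff_mul_eq₀ hAn]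
      rw [hsum, hprod] at hbezK
      have hA1 : A ^ (n + 1) ≠ 0 := pow_ne_zero _ hA0
      apply mul_left_cancel₀ hA1
      linear_combination huv' - x * A ^ (2 * n + 1) * hbezK
    · rintro ⟨u, v, rfl⟩ y hy
      obtain ⟨u', v', rfl⟩ := (hJ y).mp hy
      rw [hmem1]
      have hint : IsIntegral ℤ (-(iota F K u * iota F K u' * iota F K c)
          - iota F K u * iota F K v' * (A * W) + iota F K v * iota F K u' * (A * ω)
          + iota F K v * iota F K v' * A) :=
        ((((((i_int u).mul (i_int u')).mul (i_int c)).neg).sub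
          (((i_int u).mul (i_int v')).mul haω')).add
          (((i_int v).mul (i_int u')).mul haω)).add
          (((i_int v).mul (i_int v')).mul (i_int a))
      convert hint using 1
      rw [hprod, i_pow, ← hA, pow_succ]
      field_simp
      ring
end
end
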